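/- If the restriction of the irreducible algebraic representation V_n(λ⁺,λ⁻) of GL_n(ℂ) to GL_{n-m}(ℂ) (embedded in the last n−m coordinates) contains a trivial constituent, then ℓ(λ⁺) + ℓ(λ⁻) ≤ 2m. -/

import Mathlib

open Matrix

noncomputable section

/-- The diagonal torus element of `GL_n(ℂ)` with diagonal entries `t i`. -/
def diagGL {n : ℕ} (t : Fin n → ℂˣ) : GL (Fin n) ℂ :=
  ⟨Matrix.diagonal fun i => (t i : ℂ), Matrix.diagonal fun i => (((t i)⁻¹ : ℂˣ) : ℂ),
    by simp [Matrix.diagonal_mul_diagonal, ← Units.val_mul],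
    by simp [Matrix.diagonal_mul_diagonal, ← Units.val_mul]⟩

/-- An element of `GL_n(ℂ)` is upper unitriangular. -/
def IsUnitri {n : ℕ} (g : GL (Fin n) ℂ) : Prop :=
  (∀ i, (g : Matrix (Fin n) (Fin n) ℂ) i i = 1) ∧
    ∀ i j : Fin n, j < i → (g : Matrix (Fin n) (Fin n) ℂ) i j = 0

/-- The number of positive entries of an integral weight `ω`; for a dominant weight
labeled by a bipartition `(λ⁺, λ⁻)` this is the length `ℓ(λ⁺)`. -/
def lenPos {n : ℕ} (ω : Fin n → ℤ) : ℕ := (Finset.univ.filter fun i => 0 < ω i).card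

/-- The number of negative entries of an integral weight `ω`; for a dominant weight
labeled by a bipartition `(λ⁺, λ⁻)` this is the length `ℓ(λ⁻)`. -/
def lenNeg {n : ℕ} (ω : Fin n → ℤ) : ℕ := (Finset.univ.filter fun i => ω i < 0).card

/-- `ρ` is (a model of) the irreducible representation `V_n(λ⁺,λ⁻)` of `GL_n(ℂ)` with
highest weight the antitone integer vector `ω = (λ⁺, 0, …, 0, −λ⁻)`: it is finite
dimensional and irreducible, and it has a nonzero highest weight vector fixed by the
upper unitriangular subgroup on which the diagonal torus acts by the character `ω`. -/
structure IsHWRep (n : ℕ) {V : Type*} [AddCommGroup V] [Module ℂ V]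
    (ρ : GL (Fin n) ℂ →* (V →ₗ[ℂ] V)ˣ) (ω : Fin n → ℤ) : Prop where
  finite : FiniteDimensional ℂ V
  dominant : Antitone ω
  irred : ∀ W : Submodule ℂ V,
    (∀ g : GL (Fin n) ℂ, ∀ v ∈ W, (ρ g : V →ₗ[ℂ] V) v ∈ W) → W = ⊥ ∨ W = ⊤
  exists_hw : ∃ v : V, v ≠ 0 ∧
    (∀ g : GL (Fin n) ℂ, IsUnitri g → (ρ g : V →ₗ[ℂ] V) v = v) ∧
    ∀ t : Fin n → ℂˣ,
      (ρ (diagGL t) : V →ₗ[ℂ] V) v = (∏ i, (t i : ℂ) ^ (ω i)) • v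

/-- Block-diagonal embedding `A ↦ diag(A, 1)` as a multiplicative monoid map on matrices. -/
def blockTLHom (m k : ℕ) :
    Matrix (Fin m) (Fin m) ℂ →* Matrix (Fin (m + k)) (Fin (m + k)) ℂ where
  toFun A := Matrix.reindex finSumFinEquiv finSumFinEquiv (Matrix.fromBlocks A 0 0 1)
  map_one' := by simp [Matrix.fromBlocks_one]
  map_mul' A B := by
    simp only [Matrix.reindex_apply, Matrix.submatrix_mul_equiv,
      Matrix.fromBlocks_multiply]
    simp

/-- Block-diagonal embedding `A ↦ diag(1, A)` as a multiplicative monoid map on matrices. -/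
def blockBRHom (m k : ℕ) :
    Matrix (Fin k) (Fin k) ℂ →* Matrix (Fin (m + k)) (Fin (m + k)) ℂ where
  toFun A := Matrix.reindex finSumFinEquiv finSumFinEquiv (Matrix.fromBlocks 1 0 0 A)
  map_one' := by simp [Matrix.fromBlocks_one]
  map_mul' A B := by
    simp only [Matrix.reindex_apply, Matrix.submatrix_mul_equiv,
      Matrix.fromBlocks_multiply]
    simp

/-- The top-left block embedding `GL_m(ℂ) → GL_{m+k}(ℂ)`. -/
def embTL (m k : ℕ) : GL (Fin m) ℂ →* GL (Fin (m + k)) ℂ := Units.map (blockTLHom m k)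

/-- The bottom-right block embedding `GL_k(ℂ) → GL_{m+k}(ℂ)`. -/
def embBR (m k : ℕ) : GL (Fin k) ℂ →* GL (Fin (m + k)) ℂ := Units.map (blockBRHom m k)

/-- The truncation of a dominant weight on `GL_{m+k}` labeled by a bipartition
`(λ⁺, λ⁻)` with `ℓ(λ⁺) + ℓ(λ⁻) ≤ m` to the dominant weight on `GL_m` labeled by the
same bipartition. -/
def restrWeight (m k : ℕ) (ω : Fin (m + k) → ℤ) : Fin m → ℤ := fun i =>
  if (i : ℕ) < lenPos ω then ω ⟨(i : ℕ), by have := i.isLt; omega⟩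
  else if m - lenNeg ω ≤ (i : ℕ) then ω ⟨(i : ℕ) + k, by have := i.isLt; omega⟩
  else 0

end

lemma recur {V : Type*} [AddCommGroup V] [Module ℂ V] [FiniteDimensional ℂ V]
    (f : Module.End ℂ V) (ξ : V →ₗ[ℂ] ℂ) (v : V) (q : ℕ) (hq : 0 < q) (c : ℂ)
    (h : ∀ i : ℕ, ((i : ℂ) + 1) ^ q * ξ ((f ^ i) v) = c) : c = 0 := by
  classical
  by_contra hc
  set p := f.charpoly with hp
  set d := p.natDegree
  have hval : ∀ i : ℕ, ξ ((f ^ i) v) = c / ((i : ℂ) + 1) ^ q := by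
    intro i
    have : ((i : ℂ) + 1) ^ q ≠ 0 := pow_ne_zero _ (by exact_mod_cast Nat.succ_ne_zero i)
    field_simp
    rw [mul_comm]; exact h i
  have hsum : ∀ t : ℕ, ∑ i ∈ Finset.range (d + 1), p.coeff i / (((i + t : ℕ) : ℂ) + 1) ^ q = 0 := by
    intro t
    have h0 : Polynomial.aeval f p = 0 := LinearMap.aeval_self_charpoly f
    have h1 : ξ ((Polynomial.aeval f p) ((f ^ t) v)) = 0 := by rw [h0]; simp
    rw [Polynomial.aeval_eq_sum_range] at h1
    simp only [LinearMap.sum_apply, LinearMap.smul_apply, map_sum, map_smul, smul_eq_mul,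
      ← Module.End.mul_apply, ← pow_add, hval] at h1
    have : c * ∑ i ∈ Finset.range (d + 1), p.coeff i / (((i + t : ℕ) : ℂ) + 1) ^ q = 0 := by
      rw [Finset.mul_sum, ← h1]
      exact Finset.sum_congr rfl fun i _ => by ring
    exact (mul_eq_zero.1 this).resolve_left hc
  let Q : Polynomial ℂ := ∑ i ∈ Finset.range (d + 1), Polynomial.C (p.coeff i) *
    ∏ l ∈ (Finset.range (d + 1)).erase i, (Polynomial.X + Polynomial.C (l : ℂ)) ^ q
  have hQ : Q = 0 := by
    refine Polynomial.eq_zero_of_infinite_isRoot Q ?_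
    refine (Set.infinite_range_of_injective (f := fun t : ℕ => ((t : ℂ) + 1)) ?_).mono ?_
    · intro a b hab; simpa using hab
    · rintro _ ⟨t, rfl⟩
      have hne : ∀ l : ℕ, ((t : ℂ) + 1 + l) ^ q ≠ 0 := fun l =>
        pow_ne_zero _ (by exact_mod_cast (by omega : t + 1 + l ≠ 0))
      have : Q.eval ((t : ℂ) + 1) = (∏ l ∈ Finset.range (d + 1), ((t : ℂ) + 1 + l) ^ q) *
          ∑ i ∈ Finset.range (d + 1), p.coeff i / (((i + t : ℕ) : ℂ) + 1) ^ q := by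
        simp only [Q, Polynomial.eval_finsetSum, Polynomial.eval_mul, Polynomial.eval_C,
          Polynomial.eval_prod, Polynomial.eval_pow, Polynomial.eval_add, Polynomial.eval_X]
        rw [Finset.mul_sum]
        refine Finset.sum_congr rfl fun i hi => ?_
        rw [← Finset.mul_prod_erase _ _ hi]
        have e : (((i + t : ℕ) : ℂ) + 1) = (t : ℂ) + 1 + i := by push_cast; ring
        rw [e]
        have := hne i
        field_simp
      simp only [Set.mem_ofPred_eq, Polynomial.IsRoot.def]
      rw [this, hsum, mul_zero]
  have h2 : Q.eval (-(d : ℂ)) = 0 := by rw [hQ]; simp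
  simp only [Q, Polynomial.eval_finsetSum, Polynomial.eval_mul, Polynomial.eval_C,
    Polynomial.eval_prod, Polynomial.eval_pow, Polynomial.eval_add, Polynomial.eval_X] at h2
  rw [Finset.sum_eq_single_of_mem d (by simp)] at h2
  · have hl : p.coeff d = 1 := f.charpoly_monic
    rw [hl, one_mul, Finset.prod_eq_zero_iff] at h2
    obtain ⟨l, hl, h3⟩ := h2
    have h4 := pow_eq_zero_iff (by omega) |>.1 h3
    have : (l : ℂ) = d := by linear_combination h4
    exact (Finset.mem_erase.1 hl).1 (by exact_mod_cast this)
  · intro b hb hbd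
    rw [Finset.prod_eq_zero (i := d) (by simp [Ne.symm hbd]), mul_zero]
    simp; omega

lemma eig_one {V : Type*} [AddCommGroup V] [Module ℂ V] [FiniteDimensional ℂ V]
    (f : Module.End ℂ V) (hf : IsUnit f)
    (h : ∀ N : ℕ, 0 < N → ∃ D D' : Module.End ℂ V, D * D' = 1 ∧ D' * D = 1 ∧ D * f * D' = f ^ N)
    (μ : ℂ) (hμ : f.HasEigenvalue μ) : μ = 1 := by
  have hfin : (spectrum ℂ f).Finite := Module.End.finite_spectrum f
  have hsp : ∀ N : ℕ, 0 < N → (fun x : ℂ => x ^ N) '' spectrum ℂ f = spectrum ℂ f := by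
    intro N hN
    obtain ⟨D, D', h1, h2, h3⟩ := h N hN
    rw [← spectrum.map_pow_of_pos f hN, ← h3]
    exact spectrum.units_conjugate (u := (⟨D, D', h1, h2⟩ : (Module.End ℂ V)ˣ))
  have hmem : μ ∈ spectrum ℂ f := Module.End.hasEigenvalue_iff_mem_spectrum.1 hμ
  have hne : μ ≠ 0 := by
    rintro rfl
    exact spectrum.zero_notMem ℂ hf hmem
  have hpow : ∀ N : ℕ, 0 < N → μ ^ N ∈ spectrum ℂ f := fun N hN => by
    rw [← hsp N hN]; exact ⟨μ, hmem, rfl⟩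
  have : ∃ M : ℕ, 0 < M ∧ μ ^ M = 1 := by
    have := hfin.to_subtype
    obtain ⟨a, b, hab, h5⟩ := Finite.exists_ne_map_eq_of_infinite
      (fun n : ℕ => (⟨μ ^ (n + 1), hpow _ (by omega)⟩ : spectrum ℂ f))
    simp only [Subtype.mk.injEq] at h5
    wlog hlt : a < b generalizing a b
    · exact this b a hab.symm h5.symm (by omega)
    refine ⟨b - a, by omega, ?_⟩
    have h6 : μ ^ (a + 1) * μ ^ (b - a) = μ ^ (a + 1) * 1 := by
      rw [← pow_add, mul_one, h5]; congr 1; omega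
    exact mul_left_cancel₀ (pow_ne_zero _ hne) h6
  obtain ⟨M, hM, hM1⟩ := this
  have hinj : Set.InjOn (fun x : ℂ => x ^ M) (spectrum ℂ f) := by
    exact Set.injOn_of_ncard_image_eq (by rw [hsp M hM]) hfin
  have h1 : (1 : ℂ) ∈ spectrum ℂ f := hM1 ▸ hpow M hM
  exact hinj hmem h1 (by simp [hM1])


/-- elementary unit `1 + x P`. -/
noncomputable def eGL {n : ℕ} (P : Matrix (Fin n) (Fin n) ℂ) (c x x' : ℂ) (hP : P * P = c • P)
    (h : x + x' + x * x' * c = 0) : GL (Fin n) ℂ :=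
  ⟨1 + x • P, 1 + x' • P,
    by
      have : (1 + x • P) * (1 + x' • P) = 1 + (x + x' + x * x' * c) • P := by
        simp only [mul_add, add_mul, mul_one, one_mul, smul_mul_smul_comm, hP, smul_smul, add_smul]
        abel
      rw [this, h, zero_smul, add_zero],
    by
      have : (1 + x' • P) * (1 + x • P) = 1 + (x + x' + x * x' * c) • P := by
        simp only [mul_add, add_mul, mul_one, one_mul, smul_mul_smul_comm, hP, smul_smul, add_smul]
        rw [mul_comm x' x]
        abel
      rw [this, h, zero_smul, add_zero]⟩

lemma eGL_val {n : ℕ} (P : Matrix (Fin n) (Fin n) ℂ) (c x x' : ℂ) (hP : P * P = c • P)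
    (h : x + x' + x * x' * c = 0) : (eGL P c x x' hP h : Matrix (Fin n) (Fin n) ℂ) = 1 + x • P := rfl

/-- `1 + e_j ⊗ a`. -/
noncomputable def rowM {n : ℕ} (j : Fin n) (a : Fin n → ℂ) : Matrix (Fin n) (Fin n) ℂ :=
  1 + Matrix.vecMulVec (Pi.single j 1) a

lemma rowM_mul {n : ℕ} (j : Fin n) (a b : Fin n → ℂ) :
    rowM j a * rowM j b = rowM j (a + b + a j • b) := by
  simp only [rowM, mul_add, add_mul, mul_one, one_mul, Matrix.vecMulVec_mul_vecMulVec,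
    Matrix.vecMulVec_add, Matrix.vecMulVec_smul]
  simp
  abel

lemma rowM_zero {n : ℕ} (j : Fin n) : rowM j 0 = 1 := by simp [rowM]

lemma rowM_apply {n : ℕ} (j : Fin n) (a : Fin n → ℂ) (x y : Fin n) :
    rowM j a x y = (if x = y then 1 else 0) + (if x = j then a y else 0) := by
  simp [rowM, Matrix.one_apply, Matrix.vecMulVec_apply, Pi.single_apply]

/-- as a unit -/
noncomputable def rowGL {n : ℕ} (j : Fin n) (a : Fin n → ℂ) (ha : a j = 0) : GL (Fin n) ℂ :=
  ⟨rowM j a, rowM j (-a), by simp [rowM_mul, ha, rowM_zero], by simp [rowM_mul, ha, rowM_zero]⟩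

lemma rowGL_pow {n : ℕ} (j : Fin n) (a : Fin n → ℂ) (ha : a j = 0) (N : ℕ) :
    ((rowGL j a ha ^ N : GL (Fin n) ℂ) : Matrix (Fin n) (Fin n) ℂ) = rowM j ((N : ℂ) • a) := by
  induction N with
  | zero => simp [rowM_zero]
  | succ N ih =>
    rw [pow_succ, Units.val_mul, ih]
    change rowM j _ * rowM j a = _
    rw [rowM_mul]
    congr 1
    ext x
    simp [ha]
    ring

lemma main_step {m k : ℕ} {V : Type*} [AddCommGroup V] [Module ℂ V] [FiniteDimensional ℂ V]
    (ρ : GL (Fin (m + k)) ℂ →* Module.End ℂ V) (ω : Fin (m + k) → ℤ) (v0 : V)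
    (hU : ∀ g : GL (Fin (m + k)) ℂ, IsUnitri g → ρ g v0 = v0)
    (hT : ∀ t : Fin (m + k) → ℂˣ, ρ (diagGL t) v0 = (∏ i, (t i : ℂ) ^ (ω i)) • v0)
    (ξ : V →ₗ[ℂ] ℂ) (hξ : ∀ (h : GL (Fin k) ℂ) (w : V), ξ (ρ (embBR m k h) w) = ξ w)
    (j : Fin (m + k)) (hj : 0 < ω j) (g : GL (Fin (m + k)) ℂ)
    (hg : ∀ i : Fin m, (g : Matrix (Fin (m + k)) (Fin (m + k)) ℂ) (Fin.castAdd k i) j = 0) : ξ (ρ g v0) = 0 := by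
  -- pivot
  obtain ⟨i0, hi0⟩ : ∃ i0 : Fin k, (g : Matrix (Fin (m + k)) (Fin (m + k)) ℂ) (Fin.natAdd m i0) j ≠ 0 := by
    by_contra hcon
    push Not at hcon
    have h0 : (g : Matrix (Fin (m + k)) (Fin (m + k)) ℂ) *ᵥ (Pi.single j 1) = 0 := by
      ext i
      rw [Matrix.mulVec_single_one]
      refine Fin.addCases (fun i => ?_) (fun i => ?_) i
      · simpa using hg i
      · simpa using hcon i
    have h1 : ((g⁻¹ : GL (Fin (m + k)) ℂ) : Matrix (Fin (m + k)) (Fin (m + k)) ℂ) *ᵥ ((g : Matrix (Fin (m + k)) (Fin (m + k)) ℂ) *ᵥ (Pi.single j 1)) = 0 := by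
      rw [h0, Matrix.mulVec_zero]
    rw [Matrix.mulVec_mulVec, ← Units.val_mul, inv_mul_cancel, Units.val_one, Matrix.one_mulVec] at h1
    have := congrFun h1 j
    simp at this
  set c := ((g : Matrix (Fin (m + k)) (Fin (m + k)) ℂ) (Fin.natAdd m i0) j)⁻¹ with hc
  let η : Fin (m + k) → ℂ := fun l => c * (g : Matrix (Fin (m + k)) (Fin (m + k)) ℂ) (Fin.natAdd m i0) l
  have hηj : η j = 1 := by simp [η, hc, hi0]
  let lo : Fin (m + k) → ℂ := fun l => if l < j then η l else 0
  let hi : Fin (m + k) → ℂ := fun l => if j < l then η l else 0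
  have hlo : lo j = 0 := by simp [lo]
  have hhi : hi j = 0 := by simp [hi]
  obtain ⟨q, hq⟩ : ∃ q : ℕ, ω j = q := ⟨(ω j).toNat, by omega⟩
  refine recur (ρ (rowGL j lo hlo)) (ξ ∘ₗ ρ g) v0 q (by omega) _ fun i => ?_
  -- s = i+1
  have hs : (i : ℂ) + 1 ≠ 0 := by exact_mod_cast Nat.succ_ne_zero i
  let s : ℂˣ := Units.mk0 ((i : ℂ) + 1) hs
  let t : Fin (m + k) → ℂˣ := Function.update 1 j s
  have ht : ((diagGL t : GL (Fin (m + k)) ℂ) : Matrix (Fin (m + k)) (Fin (m + k)) ℂ) = rowM j ((i : ℂ) • Pi.single j 1) := by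
    ext x y
    change Matrix.diagonal _ x y = _
    rw [rowM_apply, Matrix.diagonal_apply]
    by_cases hxy : x = y
    · subst hxy
      by_cases hx : x = j
      · subst hx; simp [t, s, add_comm]
      · simp [t, hx]
    · by_cases hx : x = j
      · subst hx; simp [hxy, Ne.symm hxy]
      · simp [hxy, hx]
  let u : GL (Fin (m + k)) ℂ := rowGL j (((i : ℂ) / ((i : ℂ) + 1)) • hi) (by simp [hhi])
  have hu : IsUnitri u := by
    constructor
    · intro x
      change rowM j _ x x = 1
      rw [rowM_apply]
      by_cases hx : x = j
      · subst hx; simp [hhi]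
      · simp [hx]
    · intro x y hxy
      change rowM j _ x y = 0
      rw [rowM_apply]
      by_cases hx : x = j
      · subst hx; simp [hi, hxy.ne', hxy.le]
      · simp [hx, hxy.ne']
  let col : Fin k → ℂ := fun l => (g : Matrix (Fin (m + k)) (Fin (m + k)) ℂ) (Fin.natAdd m l) j
  let P : Matrix (Fin k) (Fin k) ℂ := Matrix.vecMulVec col (Pi.single i0 c)
  have hP : P * P = (1 : ℂ) • P := by
    simp only [P, Matrix.vecMulVec_mul_vecMulVec]
    simp [col, hc, hi0]
  let h : GL (Fin k) ℂ := eGL P 1 i (((i : ℂ) + 1)⁻¹ - 1) hP (by field_simp; ring)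
  have key : embBR m k h * g = g * (rowGL j lo hlo ^ i * diagGL t * u) := by
    apply Units.ext
    rw [Units.val_mul, Units.val_mul, Units.val_mul, Units.val_mul, rowGL_pow, ht]
    change _ = (g : Matrix (Fin (m + k)) (Fin (m + k)) ℂ) * (_ * rowM j _)
    rw [rowM_mul, rowM_mul]
    have e : ((i : ℂ) • lo + (i : ℂ) • Pi.single j 1 + ((i : ℂ) • lo) j • (i : ℂ) • Pi.single j 1 +
        ((i : ℂ) / ((i : ℂ) + 1)) • hi +
      ((i : ℂ) • lo + (i : ℂ) • Pi.single j 1 + ((i : ℂ) • lo) j • (i : ℂ) • Pi.single j 1 : Fin (m+k) → ℂ) j •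
        ((i : ℂ) / ((i : ℂ) + 1)) • hi) = (i : ℂ) • η := by
      ext x
      simp only [Pi.add_apply, Pi.smul_apply, hlo, smul_eq_mul, Pi.single_eq_same]
      rcases lt_trichotomy x j with hx | hx | hx
      · simp [lo, hi, hx, hx.ne, not_lt.2 hx.le]
      · subst hx; simp [lo, hi, hηj]
      · simp [lo, hi, hx, hx.ne', not_lt.2 hx.le]
        field_simp
        ring
    rw [e]
    have hemb : ((embBR m k h : GL (Fin (m + k)) ℂ) : Matrix (Fin (m + k)) (Fin (m + k)) ℂ) =
      Matrix.reindex finSumFinEquiv finSumFinEquiv (Matrix.fromBlocks 1 0 0 (1 + (i : ℂ) • P)) := rfl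
    rw [hemb]
    ext x y
    have hR : ((g : Matrix (Fin (m + k)) (Fin (m + k)) ℂ) * rowM j ((i : ℂ) • η)) x y =
        (g : Matrix (Fin (m + k)) (Fin (m + k)) ℂ) x y + (g : Matrix (Fin (m + k)) (Fin (m + k)) ℂ) x j * ((i : ℂ) * η y) := by
      simp only [rowM, mul_add, mul_one, Matrix.add_apply, Matrix.mul_vecMulVec]
      simp [Matrix.vecMulVec_apply]
    rw [hR, Matrix.mul_apply, Fin.sum_univ_add]
    refine Fin.addCases (fun x => ?_) (fun x => ?_) x
    · simp [hg, Matrix.one_apply]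
    · simp [Matrix.one_apply, P, Matrix.vecMulVec_apply, Pi.single_apply, add_mul,
        Finset.sum_add_distrib, col, η]
      ring
  have e1 : ξ (ρ g v0) = ξ (ρ (g * (rowGL j lo hlo ^ i * diagGL t * u)) v0) := by
    rw [← key, map_mul, Module.End.mul_apply, hξ]
  have hprod : (∏ l, (t l : ℂ) ^ (ω l)) = ((i : ℂ) + 1) ^ q := by
    rw [Finset.prod_eq_single j]
    · simp [t, s, hq]
    · intro l _ hl; simp [t, hl]
    · simp
  rw [e1]
  simp only [map_mul, Module.End.mul_apply, hU u hu, hT, hprod, map_smul, map_pow]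
  simp

lemma main_lemma {m k : ℕ} (hk : 0 < k) {V : Type*} [AddCommGroup V] [Module ℂ V]
    [FiniteDimensional ℂ V]
    (ρ : GL (Fin (m + k)) ℂ →* Module.End ℂ V) (ω : Fin (m + k) → ℤ) (v0 : V)
    (hU : ∀ g : GL (Fin (m + k)) ℂ, IsUnitri g → ρ g v0 = v0)
    (hT : ∀ t : Fin (m + k) → ℂˣ, ρ (diagGL t) v0 = (∏ i, (t i : ℂ) ^ (ω i)) • v0)
    (ξ : V →ₗ[ℂ] ℂ) (hξ : ∀ (h : GL (Fin k) ℂ) (w : V), ξ (ρ (embBR m k h) w) = ξ w)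
    (hω : ∀ j : Fin (m + k), (j : ℕ) ≤ m → 0 < ω j) (g : GL (Fin (m + k)) ℂ) :
    ξ (ρ g v0) = 0 := by
  classical
  let A : Matrix (Fin m) (Fin (m + 1)) ℂ := fun i a =>
    (g : Matrix (Fin (m + k)) (Fin (m + k)) ℂ) (Fin.castAdd k i) (Fin.castLE (by omega) a)
  have hker : LinearMap.ker (Matrix.mulVecLin A) ≠ ⊥ :=
    LinearMap.ker_ne_bot_of_finrank_lt (by simp)
  obtain ⟨l0, hl0, hl0ne⟩ := (Submodule.ne_bot_iff _).1 hker
  have hex : (Finset.univ.filter fun a => l0 a ≠ 0).Nonempty := by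
    by_contra hcon
    rw [Finset.not_nonempty_iff_eq_empty, Finset.filter_eq_empty_iff] at hcon
    exact hl0ne (funext fun a => by simpa using hcon (Finset.mem_univ a))
  set a0 := Finset.max' _ hex with ha0
  have ha0ne : l0 a0 ≠ 0 := by
    have := Finset.max'_mem _ hex
    rw [← ha0] at this
    simpa using this
  have hmax : ∀ a, a0 < a → l0 a = 0 := by
    intro a ha
    by_contra hcon
    have := Finset.le_max' (Finset.univ.filter fun a => l0 a ≠ 0) a (by simpa using hcon)
    exact absurd ha (not_lt.2 this)
  let j : Fin (m + k) := Fin.castLE (by omega) a0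
  let l : Fin (m + k) → ℂ := fun x => if hx : (x : ℕ) < m + 1 then (l0 a0)⁻¹ * l0 ⟨x, hx⟩ else 0
  have hlj : l j = 1 := by
    have : (j : ℕ) < m + 1 := a0.2
    simp only [l, this, dif_pos]
    exact inv_mul_cancel₀ ha0ne
  have hlgt : ∀ x, j < x → l x = 0 := by
    intro x hx
    simp only [l]
    split_ifs with h
    · rw [hmax ⟨x, h⟩ hx, mul_zero]
    · rfl
  let P : Matrix (Fin (m + k)) (Fin (m + k)) ℂ := Matrix.vecMulVec (l - Pi.single j 1) (Pi.single j 1)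
  have hP : P * P = (0 : ℂ) • P := by
    simp only [P, Matrix.vecMulVec_mul_vecMulVec]
    simp [hlj]
  let b : GL (Fin (m + k)) ℂ := eGL P 0 1 (-1) hP (by ring)
  have hbval : ∀ x y, (b : Matrix (Fin (m + k)) (Fin (m + k)) ℂ) x y =
      (if x = y then 1 else 0) + (l x - (if x = j then 1 else 0)) * (if y = j then 1 else 0) := by
    intro x y
    change (1 + (1 : ℂ) • P) x y = _
    simp [P, Matrix.vecMulVec_apply, Matrix.one_apply, Pi.single_apply]
  have hb : IsUnitri b := by
    constructor
    · intro x
      rw [hbval]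
      by_cases hx : x = j
      · subst hx; simp [hlj]
      · simp [hx]
    · intro x y hxy
      rw [hbval]
      by_cases hy : y = j
      · subst hy; simp [hxy.ne', hlgt x hxy]
      · simp [hy, hxy.ne']
  have := main_step ρ ω v0 hU hT ξ hξ j (hω j (Nat.lt_succ_iff.1 a0.2)) (g * b) ?_
  · rwa [map_mul, Module.End.mul_apply, hU b hb] at this
  · intro i
    rw [Units.val_mul, Matrix.mul_apply]
    have h1 : ∀ x, (b : Matrix (Fin (m + k)) (Fin (m + k)) ℂ) x j = l x := by
      intro x; rw [hbval]; by_cases hx : x = j <;> simp [hx]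
    simp only [h1]
    have h2 : ∑ a : Fin (m + 1), A i a * l0 a = 0 := by
      have := congrFun (LinearMap.mem_ker.1 hl0) i
      simpa [Matrix.mulVec, dotProduct] using this
    have h3 : ∑ x, (g : Matrix (Fin (m + k)) (Fin (m + k)) ℂ) (Fin.castAdd k i) x * l x =
        ∑ a : Fin (m + 1), (g : Matrix (Fin (m + k)) (Fin (m + k)) ℂ) (Fin.castAdd k i) (Fin.castLE (by omega) a) *
          l (Fin.castLE (by omega) a) := by
      refine (Finset.sum_of_injOn (Fin.castLE (by omega)) ?_ ?_ ?_ ?_).symm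
      · exact (Fin.castLE_injective _).injOn
      · intro _ _; simp
      · intro x _ hx
        have : ¬ (x : ℕ) < m + 1 := fun h => hx ⟨⟨x, h⟩, by simp, rfl⟩
        simp only [l, dif_neg this, mul_zero]
      · intro _ _; rfl
    rw [h3]
    have h4 : ∀ a : Fin (m + 1), l (Fin.castLE (by omega) a) = (l0 a0)⁻¹ * l0 a := by
      intro a
      have : ((Fin.castLE (by omega : m + 1 ≤ m + k) a : Fin (m + k)) : ℕ) < m + 1 := a.2
      simp only [l, dif_pos this]
      rfl
    simp only [h4]
    have : (l0 a0)⁻¹ * ∑ a : Fin (m + 1), A i a * l0 a = 0 := by rw [h2, mul_zero]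
    rw [← this, Finset.mul_sum]
    exact Finset.sum_congr rfl fun a _ => by simp only [A]; ring


/-- lower unitriangular -/
def IsLow {n : ℕ} (g : GL (Fin n) ℂ) : Prop :=
  (∀ i, (g : Matrix (Fin n) (Fin n) ℂ) i i = 1) ∧
    ∀ i j : Fin n, i < j → (g : Matrix (Fin n) (Fin n) ℂ) i j = 0

lemma low_diag {n : ℕ} (A B : Matrix (Fin n) (Fin n) ℂ) (hA : ∀ i j, i < j → A i j = 0)
    (hB : ∀ i j, i < j → B i j = 0) (i : Fin n) : (A * B) i i = A i i * B i i := by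
  rw [Matrix.mul_apply, Finset.sum_eq_single i]
  · intro b _ hb
    rcases lt_or_gt_of_ne hb with h | h
    · rw [hB b i h, mul_zero]
    · rw [hA i b h, zero_mul]
  · simp

lemma IsLow.one {n : ℕ} : IsLow (1 : GL (Fin n) ℂ) :=
  ⟨fun i => by simp, fun i j h => by simp [h.ne]⟩

lemma IsLow.mul {n : ℕ} {g h : GL (Fin n) ℂ} (hg : IsLow g) (hh : IsLow h) : IsLow (g * h) := by
  constructor
  · intro i
    rw [Units.val_mul, low_diag _ _ hg.2 hh.2, hg.1, hh.1, one_mul]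
  · intro i j hij
    rw [Units.val_mul, Matrix.mul_apply]
    refine Finset.sum_eq_zero fun k _ => ?_
    rcases lt_or_ge i k with h | h
    · rw [hg.2 i k h, zero_mul]
    · rw [hh.2 k j (h.trans_lt hij), mul_zero]

lemma IsLow.inv {n : ℕ} {g : GL (Fin n) ℂ} (hg : IsLow g) : IsLow g⁻¹ := by
  have hz : ∀ i j : Fin n, i < j → ((g⁻¹ : GL (Fin n) ℂ) : Matrix (Fin n) (Fin n) ℂ) i j = 0 := by
    have hb : Matrix.BlockTriangular (g : Matrix (Fin n) (Fin n) ℂ) OrderDual.toDual :=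
      fun i j hij => hg.2 i j hij
    have : Invertible (g : Matrix (Fin n) (Fin n) ℂ) := Units.invertible g
    have := Matrix.blockTriangular_inv_of_blockTriangular hb
    intro i j hij
    rw [Matrix.coe_units_inv]
    exact this hij
  refine ⟨fun i => ?_, hz⟩
  have := low_diag _ _ hg.2 hz i
  rw [← Units.val_mul, mul_inv_cancel, hg.1, one_mul] at this
  rw [← this]; simp

/-- transvection -/
noncomputable def tv {n : ℕ} (i j : Fin n) (h : i ≠ j) (r : ℂ) : GL (Fin n) ℂ :=
  ⟨Matrix.transvection i j r, Matrix.transvection i j (-r),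
    by rw [Matrix.transvection_mul_transvection_same i j h]; simp,
    by rw [Matrix.transvection_mul_transvection_same i j h]; simp⟩

lemma tv_val {n : ℕ} (i j : Fin n) (h : i ≠ j) (r : ℂ) :
  (tv i j h r : Matrix (Fin n) (Fin n) ℂ) = Matrix.transvection i j r := rfl

lemma tv_mul {n : ℕ} (i j : Fin n) (h : i ≠ j) (r s : ℂ) :
    tv i j h r * tv i j h s = tv i j h (r + s) := by
  apply Units.ext
  simp only [Units.val_mul, tv_val, Matrix.transvection_mul_transvection_same i j h]

lemma tv_inv {n : ℕ} (i j : Fin n) (h : i ≠ j) (r : ℂ) : (tv i j h r)⁻¹ = tv i j h (-r) := by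
  apply inv_eq_of_mul_eq_one_right
  rw [tv_mul]
  apply Units.ext
  simp [tv_val]

lemma tv_pow {n : ℕ} (i j : Fin n) (h : i ≠ j) (r : ℂ) (N : ℕ) :
    tv i j h r ^ N = tv i j h (N * r) := by
  induction N with
  | zero => apply Units.ext; simp [tv_val]
  | succ N ih => rw [pow_succ, ih, tv_mul]; congr 1; push_cast; ring

lemma tv_left {n : ℕ} (i j : Fin n) (r : ℂ) (M : Matrix (Fin n) (Fin n) ℂ) (a b : Fin n) :
    (Matrix.transvection i j r * M) a b = M a b + if a = i then r * M j b else 0 := by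
  by_cases h : a = i
  · subst h; simp
  · simp [h]

lemma tv_right {n : ℕ} (i j : Fin n) (r : ℂ) (M : Matrix (Fin n) (Fin n) ℂ) (a b : Fin n) :
    (M * Matrix.transvection i j r) a b = M a b + if b = j then r * M a i else 0 := by
  by_cases h : b = j
  · subst h; simp
  · simp [h]

lemma tv_apply {n : ℕ} (i j : Fin n) (r : ℂ) (a b : Fin n) :
    (Matrix.transvection i j r) a b = (if a = b then 1 else 0) + if a = i ∧ b = j then r else 0 := by
  have := tv_left i j r 1 a b
  rw [mul_one] at this
  rw [this, Matrix.one_apply, Matrix.one_apply]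
  congr 1
  by_cases ha : a = i <;> by_cases hb : b = j <;> simp [ha, hb, eq_comm]
  intro h; exact absurd h.symm hb

lemma tv_low {n : ℕ} (i j : Fin n) (h : j < i) (r : ℂ) : IsLow (tv i j h.ne' r) := by
  constructor
  · intro a
    rw [tv_val, tv_apply]
    have : ¬ (a = i ∧ a = j) := fun hh => h.ne' (hh.1.symm.trans hh.2)
    simp [this]
  · intro a b hab
    rw [tv_val, tv_apply]
    have : ¬ (a = i ∧ b = j) := fun hh => by
      rw [hh.1, hh.2] at hab; exact absurd hab (not_lt.2 h.le)
    simp [this, hab.ne]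

lemma tv_upper {n : ℕ} (i j : Fin n) (h : i < j) (r : ℂ) : IsUnitri (tv i j h.ne r) := by
  constructor
  · intro a
    rw [tv_val, tv_apply]
    have : ¬ (a = i ∧ a = j) := fun hh => h.ne (hh.1.symm.trans hh.2)
    simp [this]
  · intro a b hab
    rw [tv_val, tv_apply]
    have : ¬ (a = i ∧ b = j) := fun hh => by
      rw [hh.1, hh.2] at hab; exact absurd hab (not_lt.2 h.le)
    simp [this, hab.ne']

lemma diagGL_val {n : ℕ} (t : Fin n → ℂˣ) :
    (diagGL t : Matrix (Fin n) (Fin n) ℂ) = Matrix.diagonal fun i => (t i : ℂ) := rfl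

lemma tv_eig {n : ℕ} {V : Type*} [AddCommGroup V] [Module ℂ V] [FiniteDimensional ℂ V]
    (σ : GL (Fin n) ℂ →* Module.End ℂ V) (i j : Fin n) (h : i ≠ j) (r μ : ℂ)
    (hμ : (σ (tv i j h r)).HasEigenvalue μ) : μ = 1 := by
  refine eig_one _ ((Group.isUnit _).map σ) ?_ μ hμ
  intro N hN
  let t : Fin n → ℂˣ := Function.update 1 i (Units.mk0 (N : ℂ) (by exact_mod_cast hN.ne'))
  refine ⟨σ (diagGL t), σ (diagGL t)⁻¹, by rw [← map_mul]; simp, by rw [← map_mul]; simp, ?_⟩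
  rw [← map_pow, tv_pow, ← map_mul, ← map_mul]
  congr 1
  rw [mul_inv_eq_iff_eq_mul]
  apply Units.ext
  ext a b
  rw [Units.val_mul, Units.val_mul, diagGL_val, Matrix.diagonal_mul, Matrix.mul_diagonal, tv_val,
    tv_val, tv_apply, tv_apply]
  by_cases hab : a = b
  · subst hab
    have : ¬ (a = i ∧ a = j) := fun hh => h (hh.1.symm.trans hh.2)
    simp [this]
  · by_cases hij : a = i ∧ b = j
    · obtain ⟨rfl, rfl⟩ := hij
      simp [t, h, h.symm]
    · simp [hab, hij]

/-- ordering of negative roots -/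
def rkey {n : ℕ} (i j : Fin n) : ℕ := ((i : ℕ) - (j : ℕ)) * n + j

lemma rkey_lt {n : ℕ} {i j a b : Fin n} (hji : j < i)
    (h : (i ≤ a ∧ b < j) ∨ (i < a ∧ b ≤ j)) : rkey i j < rkey a b := by
  have h1 : ((i : ℕ) - j) + 1 ≤ (a : ℕ) - b := by
    simp only [Fin.lt_def, Fin.le_def] at *; omega
  have h2 := Nat.mul_le_mul_right n h1
  have := j.2
  simp only [rkey]
  rw [add_mul] at h2
  omega

lemma rkey_inj {n : ℕ} {i j a b : Fin n} (hji : j < i) (hba : b < a)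
    (h : rkey i j = rkey a b) : i = a ∧ j = b := by
  have aux : ∀ x y p q : ℕ, p < n → q < n → x * n + p = y * n + q → x ≤ y := by
    intro x y p q hp hq hh
    by_contra hc
    have := Nat.mul_le_mul_right n (by omega : y + 1 ≤ x)
    rw [add_mul] at this
    omega
  simp only [rkey] at h
  have e := le_antisymm (aux _ _ _ _ j.2 b.2 h) (aux _ _ _ _ b.2 j.2 h.symm)
  rw [e] at h
  simp only [Fin.lt_def, Fin.ext_iff] at *
  omega

lemma kolchin {n : ℕ} {V : Type*} [AddCommGroup V] [Module ℂ V] [FiniteDimensional ℂ V]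
    [Nontrivial V] (σ : GL (Fin n) ℂ →* Module.End ℂ V) :
    ∃ w : V, w ≠ 0 ∧ ∀ u, IsLow u → σ u w = w := by
  let S : Set (Submodule ℂ V) := {W | W ≠ ⊥ ∧ ∀ u, IsLow u → ∀ w ∈ W, σ u w ∈ W}
  have hS : S.Nonempty := ⟨⊤, top_ne_bot, fun _ _ _ _ => Submodule.mem_top⟩
  obtain ⟨W, ⟨hW0, hWst⟩, hmin⟩ := (wellFounded_lt (α := Submodule ℂ V)).has_min S hS
  have hmin' : ∀ W' : Submodule ℂ V, W' ≤ W → W' ∈ S → W' = W := by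
    intro W' hle hW'
    by_contra hne
    exact hmin W' hW' (lt_of_le_of_ne hle hne)
  let X : ℕ → GL (Fin n) ℂ → Prop := fun c g => IsLow g ∧
    ∀ i j : Fin n, j < i → rkey i j < c → (g : Matrix (Fin n) (Fin n) ℂ) i j = 0
  have hstep : ∀ c, (∀ x, X (c + 1) x → ∀ w ∈ W, σ x w = w) → ∀ x, X c x → ∀ w ∈ W, σ x w = w := by
    intro c ih x hx
    by_cases hex : ∃ i j : Fin n, j < i ∧ rkey i j = c
    swap
    · refine ih x ⟨hx.1, fun i j hji hk => ?_⟩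
      refine hx.2 i j hji ?_
      have : rkey i j ≠ c := fun h => hex ⟨i, j, hji, h⟩
      omega
    obtain ⟨i, j, hji, hc⟩ := hex
    set r := (x : Matrix (Fin n) (Fin n) ℂ) i j with hr
    set t := tv i j hji.ne' r with ht
    have htl : IsLow t := tv_low i j hji r
    have hcomm : ∀ u, IsLow u → X (c + 1) (t⁻¹ * u⁻¹ * t * u) := by
      intro u hu
      refine ⟨((htl.inv.mul hu.inv).mul htl).mul hu, ?_⟩
      intro a b hba hk
      set p := (u * t)⁻¹ with hp
      have hpl : IsLow p := (hu.mul htl).inv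
      have e : ((t⁻¹ * u⁻¹ * t * u : GL (Fin n) ℂ) : Matrix (Fin n) (Fin n) ℂ) =
          1 + (p : Matrix (Fin n) (Fin n) ℂ) *
            ((t : Matrix (Fin n) (Fin n) ℂ) * (u : Matrix (Fin n) (Fin n) ℂ) -
              (u : Matrix (Fin n) (Fin n) ℂ) * (t : Matrix (Fin n) (Fin n) ℂ)) := by
        rw [mul_sub, ← Units.val_mul u t, ← Units.val_mul p, hp, inv_mul_cancel, ← Units.val_mul t u,
          ← Units.val_mul]
        simp [mul_assoc]
      rw [e, Matrix.add_apply, Matrix.one_apply_ne hba.ne', zero_add, Matrix.mul_apply]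
      refine Finset.sum_eq_zero fun k _ => ?_
      rcases lt_or_ge a k with hak | hak
      · rw [hpl.2 a k hak, zero_mul]
      · rw [Matrix.sub_apply, ht, tv_val, tv_left, tv_right]
        have hno : ¬ ((i ≤ a ∧ b < j) ∨ (i < a ∧ b ≤ j)) := fun h => by
          have := rkey_lt hji h
          omega
        by_cases hki : k = i
        · subst hki
          by_cases hbj : b = j
          · subst hbj
            simp [hu.1]
          · rcases lt_or_gt_of_ne hbj with h | h
            · exact absurd (Or.inl ⟨hak, h⟩) hno
            · simp [hbj, hu.2 j b h]
        · by_cases hbj : b = j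
          · subst hbj
            rcases lt_or_gt_of_ne hki with h | h
            · simp [hki, hu.2 k i h]
            · exact absurd (Or.inr ⟨h.trans_le hak, le_rfl⟩) hno
          · simp [hki, hbj]
    let K : Submodule ℂ V := W ⊓ LinearMap.ker (σ t - 1)
    have hKmem : ∀ w, w ∈ K ↔ w ∈ W ∧ σ t w = w := by
      intro w
      simp [K, sub_eq_zero]
    have hK : K = W := by
      refine hmin' K inf_le_left ⟨?_, ?_⟩
      · let f : Module.End ℂ W := (σ t).restrict (hWst t htl)
        have : Nontrivial W := Submodule.nontrivial_iff_ne_bot.2 hW0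
        obtain ⟨μ, hμ⟩ := Module.End.exists_eigenvalue f
        obtain ⟨w, hw⟩ := hμ.exists_hasEigenvector
        have hw1 : σ t (w : V) = μ • (w : V) := by
          have := congrArg Subtype.val hw.apply_eq_smul
          simpa [f] using this
        have hw0 : (w : V) ≠ 0 := by simpa using hw.2
        have hμ1 : μ = 1 := tv_eig σ i j hji.ne' r μ
          (Module.End.hasEigenvalue_of_hasEigenvector
            ⟨Module.End.mem_eigenspace_iff.2 hw1, hw0⟩)
        rw [Submodule.ne_bot_iff]
        exact ⟨w, (hKmem _).2 ⟨w.2, by rw [hw1, hμ1, one_smul]⟩, hw0⟩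
      · intro u hu w hw
        rw [hKmem] at hw ⊢
        refine ⟨hWst u hu w hw.1, ?_⟩
        have e : t * u = u * t * (t⁻¹ * u⁻¹ * t * u) := by group
        rw [← Module.End.mul_apply, ← map_mul, e, map_mul, Module.End.mul_apply,
          ih _ (hcomm u hu) w hw.1, map_mul, Module.End.mul_apply, hw.2]
    have hx' : X (c + 1) (t⁻¹ * x) := by
      refine ⟨htl.inv.mul hx.1, ?_⟩
      intro a b hba hk
      rw [Units.val_mul, ht, tv_inv, tv_val, tv_left]
      by_cases hab : a = i ∧ b = j
      · obtain ⟨rfl, rfl⟩ := hab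
        simp [hx.1.1, ← hr]
      · have hne : rkey a b ≠ c := by
          intro h
          have := rkey_inj hba hji (h.trans hc.symm)
          exact hab this
        rw [hx.2 a b hba (by omega), zero_add]
        split_ifs with hai
        · subst hai
          rcases lt_trichotomy b j with h | h | h
          · have := rkey_lt hji (Or.inl ⟨le_refl a, h⟩)
            omega
          · exact absurd ⟨rfl, h⟩ hab
          · rw [hx.1.2 j b h, mul_zero]
        · rfl
    intro w hw
    have e : x = t * (t⁻¹ * x) := by group
    have h1 := ih _ hx' w hw
    have h2 : σ t w = w := by
      rw [← hK] at hw
      exact ((hKmem w).1 hw).2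
    rw [e, map_mul, Module.End.mul_apply, h1, h2]
  have hall : ∀ c, ∀ x, X c x → ∀ w ∈ W, σ x w = w := by
    have hbig : ∀ x, X (n * n + n) x → ∀ w ∈ W, σ x w = w := by
      intro x hx w _
      have : x = 1 := by
        apply Units.ext
        ext a b
        rcases lt_trichotomy a b with h | h | h
        · rw [hx.1.2 a b h]; simp [h.ne]
        · subst h; rw [hx.1.1]; simp
        · rw [hx.2 a b h ?_]
          · simp [h.ne']
          · have h1 : (a : ℕ) - b ≤ n := by omega
            have := Nat.mul_le_mul_right n h1
            simp only [rkey]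
            omega
      rw [this, map_one]; rfl
    intro c
    by_cases hc : c ≤ n * n + n
    · exact Nat.decreasingInduction (motive := fun c _ => ∀ x, X c x → ∀ w ∈ W, σ x w = w)
        (fun c _ ih => hstep c ih) hbig hc
    · intro x hx
      exact hbig x ⟨hx.1, fun i j hji hk => hx.2 i j hji (by omega)⟩
  obtain ⟨w, hw, hw0⟩ := (Submodule.ne_bot_iff _).1 hW0
  exact ⟨w, hw0, fun u hu => hall 0 u ⟨hu, fun _ _ _ h => absurd h (Nat.not_lt_zero _)⟩ w hw⟩


lemma sl2_identity {n : ℕ} (i j : Fin n) (h : i ≠ j) (a r : ℂ) (d : ℂˣ) (hd : (d : ℂ) = 1 + a * r) :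
    tv i j h a * tv j i h.symm r = tv j i h.symm (r / d) *
      diagGL (Function.update (Function.update 1 i d) j d⁻¹) * tv i j h (a / d) := by
  have hd0 : (d : ℂ) ≠ 0 := d.ne_zero
  apply Units.ext
  ext x y
  simp only [Units.val_mul, tv_val, diagGL_val]
  rw [tv_left, tv_right, tv_apply, tv_apply, Matrix.mul_diagonal, Matrix.mul_diagonal, tv_apply,
    tv_apply]
  by_cases hxi : x = i
  · subst hxi
    by_cases hyi : y = x
    · subst hyi
      simp [h, h.symm, hd]
    · by_cases hyj : y = j
      · subst hyj
        simp [h, h.symm]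
      · simp [h, h.symm, hyi, hyj, Ne.symm hyi, Ne.symm hyj]
  · by_cases hxj : x = j
    · subst hxj
      by_cases hyi : y = i
      · subst hyi
        simp [h, h.symm]
      · by_cases hyj : y = x
        · subst hyj
          simp [h, h.symm]
          field_simp
          rw [hd]
        · simp [h, h.symm, hyi, hyj, Ne.symm hyi, Ne.symm hyj]
    · by_cases hxy : x = y
      · subst hxy
        simp [hxi, hxj]
      · simp [hxi, hxj, hxy]

lemma conj_low {n : ℕ} (i j : Fin n) (h : i < j) (hs : (j : ℕ) = i + 1) (a : ℂ)
    (u : GL (Fin n) ℂ) (hu : IsLow u) (h0 : (u : Matrix (Fin n) (Fin n) ℂ) j i = 0) :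
    IsLow (tv i j h.ne a * u * tv i j h.ne (-a)) := by
  constructor
  · intro x
    rw [Units.val_mul, Units.val_mul, tv_val, tv_val, tv_right, tv_left, tv_left, hu.1]
    by_cases hxi : x = i
    · subst hxi; simp [h.ne, h0]
    · by_cases hxj : x = j
      · subst hxj; simp [h.ne', h0]
      · simp [hxi, hxj]
  · intro x y hxy
    rw [Units.val_mul, Units.val_mul, tv_val, tv_val, tv_right, tv_left, tv_left, hu.2 x y hxy]
    by_cases hxi : x = i
    · subst hxi
      by_cases hyj : y = j
      · subst hyj; simp [hu.1, h0]
      · have : j < y := by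
          simp only [Fin.lt_def, Fin.ext_iff] at *; omega
        simp [hyj, hu.2 j y this]
    · by_cases hyj : y = j
      · subst hyj
        have : x < i := by
          simp only [Fin.lt_def, Fin.ext_iff] at *; omega
        simp [hxi, hu.2 x i this]
      · simp [hxi, hyj]

lemma diag_conj_low {n : ℕ} (t : Fin n → ℂˣ) (u : GL (Fin n) ℂ) (hu : IsLow u) :
    IsLow (diagGL t * u * (diagGL t)⁻¹) := by
  have e : ((diagGL t)⁻¹ : GL (Fin n) ℂ) = diagGL (fun i => (t i)⁻¹) := by
    apply inv_eq_of_mul_eq_one_right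
    apply Units.ext
    simp [diagGL_val, Matrix.diagonal_mul_diagonal]
  rw [e]
  constructor
  · intro i
    rw [Units.val_mul, Units.val_mul, diagGL_val, diagGL_val, Matrix.mul_diagonal,
      Matrix.diagonal_mul, hu.1]
    simp
  · intro i j hij
    rw [Units.val_mul, Units.val_mul, diagGL_val, diagGL_val, Matrix.mul_diagonal,
      Matrix.diagonal_mul, hu.2 i j hij]
    simp

lemma tv_comm {n : ℕ} (i k j : Fin n) (hik : i ≠ k) (hkj : k ≠ j) (hij : i ≠ j) (a : ℂ) :
    tv i j hij a = tv i k hik a * tv k j hkj 1 * tv i k hik (-a) * tv k j hkj (-1) := by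
  apply Units.ext
  ext x y
  simp only [Units.val_mul, tv_val]
  simp only [tv_right, tv_apply]
  by_cases hyj : y = j
  · subst hyj
    by_cases hxi : x = i
    · subst hxi; simp [hik, hkj, hij, hik.symm, hkj.symm, hij.symm]
    · by_cases hxk : x = k
      · subst hxk; simp [hik, hkj, hij, hik.symm, hkj.symm, hij.symm]
      · simp [hxi, hxk, hik, hkj, hij, hik.symm, hkj.symm, hij.symm]
  · by_cases hyk : y = k
    · subst hyk
      by_cases hxi : x = i
      · subst hxi; simp [hik, hkj, hij, hik.symm, hkj.symm, hij.symm]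
      · simp [hxi, hik, hkj, hij, hik.symm, hkj.symm, hij.symm]
    · simp [hyj, hyk]

lemma span_low {n : ℕ} {V : Type*} [AddCommGroup V] [Module ℂ V] [FiniteDimensional ℂ V]
    (ρ : GL (Fin n) ℂ →* Module.End ℂ V) (ω : Fin n → ℤ) (v0 : V) (hv0 : v0 ≠ 0)
    (hU : ∀ g : GL (Fin n) ℂ, IsUnitri g → ρ g v0 = v0)
    (hT : ∀ t : Fin n → ℂˣ, ρ (diagGL t) v0 = (∏ i, (t i : ℂ) ^ (ω i)) • v0)
    (hirr : ∀ W : Submodule ℂ V, (∀ g, ∀ v ∈ W, ρ g v ∈ W) → W = ⊥ ∨ W = ⊤) :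
    Submodule.span ℂ ((fun u => ρ u v0) '' {u | IsLow u}) = ⊤ := by
  set W := Submodule.span ℂ ((fun u => ρ u v0) '' {u | IsLow u}) with hW
  have hmem : ∀ u, IsLow u → ρ u v0 ∈ W := fun u hu => Submodule.subset_span ⟨u, hu, rfl⟩
  have hgen : ∀ f : Module.End ℂ V, ∀ W' : Submodule ℂ V, (∀ u, IsLow u → f (ρ u v0) ∈ W') →
      ∀ w ∈ W, f w ∈ W' := by
    intro f W' h w hw
    have : W ≤ W'.comap f := by
      rw [hW, Submodule.span_le]
      rintro _ ⟨u, hu, rfl⟩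
      exact h u hu
    exact this hw
  let St : GL (Fin n) ℂ → Prop := fun g => ∀ w ∈ W, ρ g w ∈ W
  have hmul : ∀ g h, St g → St h → St (g * h) := by
    intro g h hg hh w hw
    rw [map_mul, Module.End.mul_apply]
    exact hg _ (hh _ hw)
  have hlow : ∀ g, IsLow g → St g := by
    intro g hg
    refine hgen (ρ g) W fun u hu => ?_
    rw [← Module.End.mul_apply, ← map_mul]
    exact hmem _ (hg.mul hu)
  have hdiag : ∀ t, St (diagGL t) := by
    intro t
    refine hgen _ W fun u hu => ?_
    have e : diagGL t * u = diagGL t * u * (diagGL t)⁻¹ * diagGL t := by group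
    rw [← Module.End.mul_apply, ← map_mul, e, map_mul, Module.End.mul_apply, hT, map_smul]
    exact W.smul_mem _ (hmem _ (diag_conj_low t u hu))
  have hsimple : ∀ (i j : Fin n) (h : i < j), (j : ℕ) = i + 1 → ∀ a, St (tv i j h.ne a) := by
    intro i j h hs
    let W2 : Submodule ℂ V :=
      { carrier := {w | {a | ρ (tv i j h.ne a) w ∉ W}.Finite}
        zero_mem' := by simp
        add_mem' := by
          intro x y hx hy
          refine (Set.Finite.union hx hy).subset ?_
          intro a ha
          by_contra hc
          simp only [Set.mem_union, Set.mem_ofPred_eq, not_or, not_not] at hc ha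
          exact ha (by rw [map_add]; exact W.add_mem hc.1 hc.2)
        smul_mem' := by
          intro c x hx
          refine Set.Finite.subset hx ?_
          intro a ha hc
          exact ha (by rw [map_smul]; exact W.smul_mem _ hc) }
    have hW2 : ∀ w, w ∈ W2 ↔ {a | ρ (tv i j h.ne a) w ∉ W}.Finite := fun w => Iff.rfl
    have hle : W ≤ W2 := by
      intro w hw
      refine hgen 1 W2 (fun u hu => ?_) w hw
      change ρ u v0 ∈ W2
      rw [hW2]
      set r := (u : Matrix (Fin n) (Fin n) ℂ) j i with hr
      refine (Set.finite_singleton (-r⁻¹)).subset ?_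
      intro a ha
      by_contra hne
      apply ha
      have hd : 1 + a * r ≠ 0 := by
        intro h0
        apply hne
        have hr0 : r ≠ 0 := by rintro h1; rw [h1] at h0; simp at h0
        rw [Set.mem_singleton_iff]
        field_simp
        linear_combination h0
      let d : ℂˣ := Units.mk0 _ hd
      have hul : IsLow (u * tv j i h.ne' (-r)) := hu.mul (tv_low j i h _)
      have hcl := conj_low i j h hs a _ hul (by
        rw [Units.val_mul, tv_val, tv_right]; simp [hu.1, ← hr])
      have e : tv i j h.ne a * u = (tv i j h.ne a * (u * tv j i h.ne' (-r)) * tv i j h.ne (-a)) *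
          (tv i j h.ne a * tv j i h.ne' r) := by
        rw [← tv_inv, ← tv_inv]; group
      rw [← Module.End.mul_apply, ← map_mul, e, sl2_identity i j h.ne a r d rfl, ← mul_assoc,
        ← mul_assoc, map_mul, Module.End.mul_apply, hU _ (tv_upper i j h _), map_mul,
        Module.End.mul_apply, hT, map_smul]
      exact W.smul_mem _ (hmem _ (hcl.mul (tv_low j i h _)))
    have hEq : W = W2 := by
      obtain ⟨s, hs⟩ : W2.FG := IsNoetherian.noetherian W2
      have hfin : (⋃ x ∈ s, {a | ρ (tv i j h.ne a) x ∉ W}).Finite := by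
        refine Set.Finite.biUnion s.finite_toSet fun x hx => ?_
        exact (hW2 x).1 (hs ▸ Submodule.subset_span hx)
      obtain ⟨a, ha⟩ := hfin.exists_notMem
      have hmap : W2.map (ρ (tv i j h.ne a)) ≤ W := by
        rw [← hs, Submodule.map_span, Submodule.span_le]
        rintro _ ⟨x, hx, rfl⟩
        by_contra hc
        exact ha (Set.mem_biUnion hx hc)
      have hinj : Function.Injective (ρ (tv i j h.ne a)) := by
        intro x y hxy
        have := congrArg (ρ (tv i j h.ne a)⁻¹) hxy
        rwa [← Module.End.mul_apply, ← Module.End.mul_apply, ← map_mul, inv_mul_cancel, map_one] at this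
      refine Submodule.eq_of_le_of_finrank_le hle ?_
      rw [(Submodule.equivMapOfInjective _ hinj W2).finrank_eq]
      exact Submodule.finrank_mono hmap
    intro b w hw
    rw [hEq] at hw ⊢
    rw [hW2] at hw ⊢
    have : {a | ρ (tv i j h.ne a) (ρ (tv i j h.ne b) w) ∉ W} =
        (fun a => a + b) ⁻¹' {a | ρ (tv i j h.ne a) w ∉ W} := by
      ext a
      simp only [Set.mem_ofPred_eq, Set.mem_preimage]
      rw [← Module.End.mul_apply, ← map_mul, tv_mul]
    rw [this]
    exact hw.preimage (add_left_injective b).injOn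
  have hup : ∀ (l : ℕ) (i j : Fin n) (h : i < j), (j : ℕ) = i + 1 + l → ∀ a, St (tv i j h.ne a) := by
    intro l
    induction l with
    | zero => exact fun i j h hs => hsimple i j h hs
    | succ l ih =>
      intro i j h hs a
      let k : Fin n := ⟨i + 1 + l, by omega⟩
      have hik : i < k := by simp only [Fin.lt_def, k]; omega
      have hkj : k < j := by simp only [Fin.lt_def, k]; omega
      rw [tv_comm i k j hik.ne hkj.ne h.ne]
      refine hmul _ _ (hmul _ _ (hmul _ _ ?_ ?_) ?_) ?_
      · exact ih i k hik rfl _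
      · exact hsimple k j hkj (by simp only [k]; omega) _
      · exact ih i k hik rfl _
      · exact hsimple k j hkj (by simp only [k]; omega) _
  have hall : ∀ g, St g := by
    intro g
    have := Matrix.diagonal_transvection_induction_of_det_ne_zero
      (fun M => ∀ g : GL (Fin n) ℂ, (g : Matrix (Fin n) (Fin n) ℂ) = M → St g)
      (g : Matrix (Fin n) (Fin n) ℂ) ((Matrix.isUnit_iff_isUnit_det _).1 g.isUnit).ne_zero ?_ ?_ ?_
    · exact this g rfl
    · intro D hD g hg
      rw [Matrix.det_diagonal, Finset.prod_ne_zero_iff] at hD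
      have : g = diagGL (fun i => Units.mk0 (D i) (hD i (Finset.mem_univ i))) := by
        apply Units.ext; rw [hg]; rfl
      rw [this]; exact hdiag _
    · rintro ⟨i, j, hij, c⟩ g hg
      have : g = tv i j hij c := by apply Units.ext; rw [hg]; rfl
      rw [this]
      rcases lt_or_gt_of_ne hij with h | h
      · exact hup ((j : ℕ) - i - 1) i j h (by simp only [Fin.lt_def] at h; omega) c
      · exact hlow _ (tv_low i j h c)
    · intro A B hA hB ihA ihB g hg
      have : g = Matrix.GeneralLinearGroup.mkOfDetNeZero A hA *
          Matrix.GeneralLinearGroup.mkOfDetNeZero B hB := by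
        apply Units.ext; rw [hg]; rfl
      rw [this]
      exact hmul _ _ (ihA _ rfl) (ihB _ rfl)
  rcases hirr W hall with h | h
  · exfalso
    apply hv0
    have := hmem 1 IsLow.one
    rw [h, map_one] at this
    simpa using this
  · exact h


def dualRep {n : ℕ} {V : Type*} [AddCommGroup V] [Module ℂ V]
    (ρ : GL (Fin n) ℂ →* Module.End ℂ V) : GL (Fin n) ℂ →* Module.End ℂ (Module.Dual ℂ V) where
  toFun g := (ρ g⁻¹).dualMap
  map_one' := by ext; simp
  map_mul' g h := by ext; simp

lemma dualRep_apply {n : ℕ} {V : Type*} [AddCommGroup V] [Module ℂ V]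
    (ρ : GL (Fin n) ℂ →* Module.End ℂ V) (g : GL (Fin n) ℂ) (x : Module.Dual ℂ V) (w : V) :
    dualRep ρ g x w = x (ρ g⁻¹ w) := rfl

def trGL {n : ℕ} (g : GL (Fin n) ℂ) : GL (Fin n) ℂ :=
  ⟨(g : Matrix (Fin n) (Fin n) ℂ)ᵀ, ((g⁻¹ : GL (Fin n) ℂ) : Matrix (Fin n) (Fin n) ℂ)ᵀ,
    by rw [← Matrix.transpose_mul, ← Units.val_mul, inv_mul_cancel]; simp,
    by rw [← Matrix.transpose_mul, ← Units.val_mul, mul_inv_cancel]; simp⟩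

lemma trGL_val {n : ℕ} (g : GL (Fin n) ℂ) :
    (trGL g : Matrix (Fin n) (Fin n) ℂ) = (g : Matrix (Fin n) (Fin n) ℂ)ᵀ := rfl

lemma trGL_one {n : ℕ} : trGL (1 : GL (Fin n) ℂ) = 1 := by
  apply Units.ext; simp [trGL_val]

lemma trGL_mul {n : ℕ} (g h : GL (Fin n) ℂ) : trGL (g * h) = trGL h * trGL g := by
  apply Units.ext; simp [trGL_val]

lemma trGL_trGL {n : ℕ} (g : GL (Fin n) ℂ) : trGL (trGL g) = g := by
  apply Units.ext; simp [trGL_val]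

lemma trGL_diag {n : ℕ} (t : Fin n → ℂˣ) : trGL (diagGL t) = diagGL t := by
  apply Units.ext; simp [trGL_val, diagGL_val]

lemma trGL_low {n : ℕ} (g : GL (Fin n) ℂ) (h : IsUnitri g) : IsLow (trGL g) :=
  ⟨fun i => h.1 i, fun i j hij => h.2 j i hij⟩

lemma trGL_emb (m k : ℕ) (h : GL (Fin k) ℂ) : trGL (embBR m k h) = embBR m k (trGL h) := by
  apply Units.ext
  simp [trGL_val, embBR, blockBRHom, Matrix.fromBlocks_transpose]

def trRep {n : ℕ} {V : Type*} [AddCommGroup V] [Module ℂ V]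
    (ρ : GL (Fin n) ℂ →* Module.End ℂ V) : GL (Fin n) ℂ →* Module.End ℂ (Module.Dual ℂ V) where
  toFun g := (ρ (trGL g)).dualMap
  map_one' := by ext; simp [trGL_one]
  map_mul' g h := by ext; simp [trGL_mul]

lemma trRep_apply {n : ℕ} {V : Type*} [AddCommGroup V] [Module ℂ V]
    (ρ : GL (Fin n) ℂ →* Module.End ℂ V) (g : GL (Fin n) ℂ) (x : Module.Dual ℂ V) (w : V) :
    trRep ρ g x w = x (ρ (trGL g) w) := rfl

def revGL (n : ℕ) : GL (Fin n) ℂ :=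
  ⟨(1 : Matrix (Fin n) (Fin n) ℂ).submatrix Fin.rev id,
   (1 : Matrix (Fin n) (Fin n) ℂ).submatrix id Fin.rev,
   by ext i j; simp [Matrix.mul_apply, Matrix.one_apply],
   by rw [_root_.mul_eq_one_comm]; ext i j; simp [Matrix.mul_apply, Matrix.one_apply]⟩

lemma revGL_conj {n : ℕ} (g : GL (Fin n) ℂ) (i j : Fin n) :
    ((revGL n * g * (revGL n)⁻¹ : GL (Fin n) ℂ) : Matrix (Fin n) (Fin n) ℂ) i j =
      (g : Matrix (Fin n) (Fin n) ℂ) i.rev j.rev := by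
  have e : (((revGL n)⁻¹ : GL (Fin n) ℂ) : Matrix (Fin n) (Fin n) ℂ) =
    (1 : Matrix (Fin n) (Fin n) ℂ).submatrix id Fin.rev := rfl
  have e' : ((revGL n : GL (Fin n) ℂ) : Matrix (Fin n) (Fin n) ℂ) =
    (1 : Matrix (Fin n) (Fin n) ℂ).submatrix Fin.rev id := rfl
  rw [Units.val_mul, Units.val_mul, e, e']
  simp [Matrix.mul_apply, Matrix.one_apply]

lemma revGL_low {n : ℕ} (g : GL (Fin n) ℂ) (h : IsUnitri g) :
    IsLow (revGL n * g * (revGL n)⁻¹) := by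
  constructor
  · intro i; rw [revGL_conj, h.1]
  · intro i j hij; rw [revGL_conj, h.2]; simpa using hij

lemma revGL_diag {n : ℕ} (t : Fin n → ℂˣ) :
    revGL n * diagGL t * (revGL n)⁻¹ = diagGL (fun i => t i.rev) := by
  apply Units.ext
  ext i j
  rw [revGL_conj, diagGL_val, diagGL_val]
  simp [Matrix.diagonal_apply]

lemma diagGL_inv {n : ℕ} (t : Fin n → ℂˣ) : (diagGL t)⁻¹ = diagGL (fun i => (t i)⁻¹) := by
  apply inv_eq_of_mul_eq_one_right
  apply Units.ext
  simp [diagGL_val, Matrix.diagonal_mul_diagonal]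

lemma IsUnitri_inv {n : ℕ} (g : GL (Fin n) ℂ) (h : IsUnitri g) : IsUnitri g⁻¹ := by
  have h1 := (trGL_low g h).inv
  have e : (trGL g)⁻¹ = trGL g⁻¹ := by
    apply inv_eq_of_mul_eq_one_right
    rw [← trGL_mul, inv_mul_cancel, trGL_one]
  rw [e] at h1
  exact ⟨fun i => h1.1 i, fun i j hij => h1.2 j i hij⟩

lemma lowest_exists {n : ℕ} {V : Type*} [AddCommGroup V] [Module ℂ V] [FiniteDimensional ℂ V]
    (ρ : GL (Fin n) ℂ →* Module.End ℂ V) (ω : Fin n → ℤ) (v0 : V) (hv0 : v0 ≠ 0)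
    (hU : ∀ g : GL (Fin n) ℂ, IsUnitri g → ρ g v0 = v0)
    (hT : ∀ t : Fin n → ℂˣ, ρ (diagGL t) v0 = (∏ i, (t i : ℂ) ^ (ω i)) • v0)
    (hirr : ∀ W : Submodule ℂ V, (∀ g, ∀ v ∈ W, ρ g v ∈ W) → W = ⊥ ∨ W = ⊤) :
    ∃ x : Module.Dual ℂ V, x ≠ 0 ∧ (∀ u, IsLow u → ∀ w, x (ρ u w) = x w) ∧
      ∀ t : Fin n → ℂˣ, ∀ w, x (ρ (diagGL t) w) = (∏ i, (t i : ℂ) ^ (ω i)) * x w := by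
  haveI : Nontrivial V := ⟨⟨v0, 0, hv0⟩⟩
  obtain ⟨x, hx0, hx⟩ := kolchin (dualRep ρ)
  have hlow : ∀ u, IsLow u → ∀ w, x (ρ u w) = x w := by
    intro u hu w
    have := congrArg (fun f : Module.Dual ℂ V => f w) (hx u⁻¹ hu.inv)
    simpa [dualRep_apply] using this
  refine ⟨x, hx0, hlow, ?_⟩
  intro t w
  have hw : w ∈ Submodule.span ℂ ((fun u => ρ u v0) '' {u | IsLow u}) := by
    rw [span_low ρ ω v0 hv0 hU hT hirr]; trivial
  induction hw using Submodule.span_induction with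
  | mem y hy =>
    obtain ⟨u, hu, rfl⟩ := hy
    have e : diagGL t * u = diagGL t * u * (diagGL t)⁻¹ * diagGL t := by group
    change x (ρ (diagGL t) (ρ u v0)) = _ * x (ρ u v0)
    rw [← Module.End.mul_apply, ← map_mul, e, map_mul, Module.End.mul_apply, hT, map_smul,
      map_smul, hlow _ (diag_conj_low t u hu), hlow u hu, smul_eq_mul]
  | zero => simp
  | add a b _ _ ha hb => rw [map_add, map_add, map_add, ha, hb, mul_add]
  | smul c a _ ha => rw [map_smul, map_smul, map_smul, ha, smul_eq_mul, smul_eq_mul]; ring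

lemma pos_of_lenPos {m k : ℕ} (ω : Fin (m + k) → ℤ) (hω : Antitone ω) (h : m < lenPos ω)
    (j : Fin (m + k)) (hj : (j : ℕ) ≤ m) : 0 < ω j := by
  by_contra hc
  have hsub : (Finset.univ.filter fun i => 0 < ω i) ⊆ Finset.Iio j := by
    intro i hi
    rw [Finset.mem_Iio]
    by_contra hij
    have := hω (not_lt.1 hij)
    have := (Finset.mem_filter.1 hi).2
    omega
  have := Finset.card_le_card hsub
  rw [Fin.card_Iio] at this
  unfold lenPos at h
  omega

lemma lenNeg_rev {n : ℕ} (ω : Fin n → ℤ) : lenPos (fun i => -ω i.rev) = lenNeg ω := by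
  unfold lenPos lenNeg
  refine Finset.card_bij (fun i _ => i.rev) ?_ ?_ ?_
  · intro i hi; simpa using hi
  · intro a _ b _ h; exact Fin.rev_injective h
  · intro b hb; exact ⟨b.rev, by simpa using hb, by simp⟩

lemma len_core {m k : ℕ} (hk : 0 < k) {V : Type*} [AddCommGroup V] [Module ℂ V]
    [FiniteDimensional ℂ V] (ρ : GL (Fin (m + k)) ℂ →* Module.End ℂ V) (ω : Fin (m + k) → ℤ)
    (hω : Antitone ω) (v0 : V) (hv0 : v0 ≠ 0)
    (hU : ∀ g : GL (Fin (m + k)) ℂ, IsUnitri g → ρ g v0 = v0)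
    (hT : ∀ t : Fin (m + k) → ℂˣ, ρ (diagGL t) v0 = (∏ i, (t i : ℂ) ^ (ω i)) • v0)
    (hirr : ∀ W : Submodule ℂ V, (∀ g, ∀ v ∈ W, ρ g v ∈ W) → W = ⊥ ∨ W = ⊤)
    (v : V) (hv : v ≠ 0) (hfix : ∀ h, ρ (embBR m k h) v = v) :
    lenPos ω ≤ m ∧ lenNeg ω ≤ m := by
  obtain ⟨x, hx0, hxl, hxt⟩ := lowest_exists ρ ω v0 hv0 hU hT hirr
  have key : ¬ ∀ g, x (ρ g v) = 0 := by
    intro hz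
    let W : Submodule ℂ V :=
      { carrier := {w | ∀ g, x (ρ g w) = 0}
        zero_mem' := by intro g; simp
        add_mem' := by intro a b ha hb g; rw [map_add, map_add, ha g, hb g, add_zero]
        smul_mem' := by intro c a ha g; rw [map_smul, map_smul, ha g, smul_zero] }
    rcases hirr W (fun g w hw g' => by
      rw [← Module.End.mul_apply, ← map_mul]; exact hw _) with h | h
    · have : v ∈ W := hz
      rw [h] at this
      exact hv (by simpa using this)
    · apply hx0
      ext w
      have : w ∈ W := by rw [h]; trivial
      have := this 1
      simpa using this
  constructor
  · by_contra hc
    apply key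
    intro g
    have := main_lemma hk (trRep ρ) ω x
      (fun g hg => by ext w; rw [trRep_apply]; exact hxl _ (trGL_low g hg) w)
      (fun t => by ext w; rw [trRep_apply, trGL_diag]; exact hxt t w)
      (Module.Dual.eval ℂ V v)
      (fun h w => by
        rw [Module.Dual.eval_apply, Module.Dual.eval_apply, trRep_apply, trGL_emb, hfix])
      (pos_of_lenPos ω hω (not_le.1 hc)) (trGL g)
    rwa [Module.Dual.eval_apply, trRep_apply, trGL_trGL] at this
  · by_contra hc
    apply key
    intro g
    have hanti : Antitone (fun i : Fin (m + k) => -ω i.rev) := by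
      intro a b hab
      exact neg_le_neg (hω (Fin.rev_le_rev.2 hab))
    have := main_lemma hk (dualRep ρ) (fun i => -ω i.rev) (x ∘ₗ ρ (revGL (m + k)))
      (fun g hg => by
        ext w
        rw [dualRep_apply]
        have e : revGL (m + k) * g⁻¹ =
          (revGL (m + k) * g⁻¹ * (revGL (m + k))⁻¹) * revGL (m + k) := by group
        rw [LinearMap.comp_apply, ← Module.End.mul_apply, ← map_mul, e, map_mul,
          Module.End.mul_apply, hxl _ (revGL_low _ (IsUnitri_inv g hg)), LinearMap.comp_apply])
      (fun t => by
        ext w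
        rw [dualRep_apply]
        have e : revGL (m + k) * diagGL (fun i => (t i)⁻¹) =
          (revGL (m + k) * diagGL (fun i => (t i)⁻¹) * (revGL (m + k))⁻¹) * revGL (m + k) := by
          group
        rw [LinearMap.comp_apply, ← Module.End.mul_apply, ← map_mul, diagGL_inv, e, map_mul,
          Module.End.mul_apply, revGL_diag, hxt, LinearMap.smul_apply, LinearMap.comp_apply,
          smul_eq_mul]
        congr 1
        rw [← Equiv.prod_comp Fin.revPerm]
        refine Finset.prod_congr rfl fun i _ => ?_
        simp)
      (Module.Dual.eval ℂ V v)
      (fun h w => by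
        rw [Module.Dual.eval_apply, Module.Dual.eval_apply, dualRep_apply, ← map_inv, hfix])
      (pos_of_lenPos _ hanti (by rw [lenNeg_rev]; exact not_le.1 hc)) (g⁻¹ * revGL (m + k))
    rw [Module.Dual.eval_apply, dualRep_apply, LinearMap.comp_apply, ← Module.End.mul_apply,
      ← map_mul] at this
    simpa using this


/-- If the restriction of the irreducible algebraic representation `V_n(λ⁺,λ⁻)` of
`GL_n(ℂ)` (`n = m + k`, with `ℓ(λ⁺) + ℓ(λ⁻) < n`, encoded by the dominant weight `ω`)
to `GL_{n-m}(ℂ)` embedded in the last `n − m` coordinates contains a trivial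
constituent (a nonzero invariant vector), then `ℓ(λ⁺) + ℓ(λ⁻) ≤ 2m`. -/
theorem length_le_of_trivial_constituent (m k : ℕ) (hk : 0 < k)
    (ω : Fin (m + k) → ℤ) (hlen : lenPos ω + lenNeg ω < m + k)
    (V : Type*) [AddCommGroup V] [Module ℂ V]
    (ρ : GL (Fin (m + k)) ℂ →* (V →ₗ[ℂ] V)ˣ) (hρ : IsHWRep (m + k) ρ ω)
    (v : V) (hv : v ≠ 0)
    (hfix : ∀ h : GL (Fin k) ℂ, (ρ (embBR m k h) : V →ₗ[ℂ] V) v = v) :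
    lenPos ω + lenNeg ω ≤ 2 * m := by
  haveI := hρ.finite
  obtain ⟨v0, hv0, hU, hT⟩ := hρ.exists_hw
  have h := len_core hk ((Units.coeHom (Module.End ℂ V)).comp ρ) ω hρ.dominant v0 hv0 hU hT
    hρ.irred v hv hfix
  omega
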